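/- For all α, β, γ, δ : Fin χ, the third response coefficients satisfy D[(α); (β, γ, δ)] f − D[(β); (γ, δ, α)] g − D[(γ); (δ, α, β)] g + D[(δ); (α, β, γ)] f = D[(β, γ); (α, δ)] g − D[(α, δ); (β, γ)] f; that is, Q_{α,βγδ}(B) − Q_{β,γδα}(−B) − Q_{γ,δαβ}(−B) + Q_{δ,αβγ}(B) = Q_{βγ,αδ}(−B) − Q_{αδ,βγ}(B). -/

import Mathlib

/-- Partial derivative of `F (λ, A)` with respect to the counting parameter `λ_i`. -/
noncomputable def pderivLam {χ : ℕ} (i : Fin χ)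
    (F : (Fin χ → ℝ) → (Fin χ → ℝ) → ℝ) : (Fin χ → ℝ) → (Fin χ → ℝ) → ℝ :=
  fun l a => fderiv ℝ (fun l' => F l' a) l (Pi.single i 1)

/-- Partial derivative of `F (λ, A)` with respect to the affinity `A_i`. -/
noncomputable def pderivAff {χ : ℕ} (i : Fin χ)
    (F : (Fin χ → ℝ) → (Fin χ → ℝ) → ℝ) : (Fin χ → ℝ) → (Fin χ → ℝ) → ℝ :=
  fun l a => fderiv ℝ (fun a' => F l a') a (Pi.single i 1)

/-- Mixed partial derivative `D[α; β] F`: derivatives with respect to the counting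
parameters `λ_{α₁}, …, λ_{α_m}` and the affinities `A_{β₁}, …, A_{β_n}`, evaluated at
`(λ, A) = (0, 0)`. -/
noncomputable def Dmix {χ : ℕ} (α β : List (Fin χ))
    (F : (Fin χ → ℝ) → (Fin χ → ℝ) → ℝ) : ℝ :=
  (List.foldr pderivLam (List.foldr pderivAff F β) α) 0 0

section helpers

variable {E : Type*} [NormedAddCommGroup E] [NormedSpace ℝ E]

/-- Directional derivative. -/
noncomputable def dirD (v : E) (G : E → ℝ) : E → ℝ := fun p => fderiv ℝ G p v

lemma dirD_smooth (v : E) {G : E → ℝ} (hG : ContDiff ℝ (⊤ : ℕ∞) G) :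
    ContDiff ℝ (⊤ : ℕ∞) (dirD v G) :=
  (hG.fderiv_right (m := (⊤ : ℕ∞)) (by exact le_rfl)).clm_apply contDiff_const

lemma dirD_comm (u v : E) {G : E → ℝ} (hG : ContDiff ℝ (⊤ : ℕ∞) G) :
    dirD u (dirD v G) = dirD v (dirD u G) := by
  have hd : Differentiable ℝ (fderiv ℝ G) :=
    (hG.fderiv_right (m := (⊤ : ℕ∞)) (by exact le_rfl)).differentiable (by simp)
  have key : ∀ (x y p : E), dirD x (dirD y G) p = fderiv ℝ (fderiv ℝ G) p x y := by
    intro x y p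
    have h := ((hd p).hasFDerivAt.clm_apply (hasFDerivAt_const y p)).fderiv
    have : dirD y G = fun q => fderiv ℝ G q y := rfl
    rw [dirD, this, h]
    simp
  funext p
  rw [key, key]
  have hs : IsSymmSndFDerivAt ℝ G p :=
    hG.contDiffAt.isSymmSndFDerivAt (by
      simp only [minSmoothness_of_isRCLikeNormedField]
      exact WithTop.coe_le_coe.2 (le_top : (2 : ℕ∞) ≤ ⊤))
  exact hs u v

lemma dirD_comp (v : E) {G : E → ℝ} (hG : ContDiff ℝ (⊤ : ℕ∞) G) (T : E →L[ℝ] E) :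
    dirD v (G ∘ T) = dirD (T v) G ∘ T := by
  funext p
  have hd : Differentiable ℝ G := hG.differentiable (by simp)
  have := ((hd (T p)).hasFDerivAt.comp p T.hasFDerivAt).fderiv
  simp [dirD, this]

/-- Fourth directional derivative at the origin. -/
noncomputable def dirM (G : E → ℝ) (a b c d : E) : ℝ :=
  dirD a (dirD b (dirD c (dirD d G))) 0

lemma dirM_swap1 {G : E → ℝ} (hG : ContDiff ℝ (⊤ : ℕ∞) G) (a b c d : E) :
    dirM G a b c d = dirM G b a c d := by
  rw [dirM, dirD_comm a b (dirD_smooth _ (dirD_smooth _ hG))]; rfl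

lemma dirM_swap2 {G : E → ℝ} (hG : ContDiff ℝ (⊤ : ℕ∞) G) (a b c d : E) :
    dirM G a b c d = dirM G a c b d := by
  rw [dirM, dirD_comm b c (dirD_smooth _ hG)]; rfl

lemma dirM_swap3 {G : E → ℝ} (hG : ContDiff ℝ (⊤ : ℕ∞) G) (a b c d : E) :
    dirM G a b c d = dirM G a b d c := by
  rw [dirM, dirD_comm c d hG]; rfl

lemma dirM_add1 (G : E → ℝ) (a a' b c d : E) :
    dirM G (a + a') b c d = dirM G a b c d + dirM G a' b c d := by
  simp [dirM, dirD]

lemma dirM_neg1 (G : E → ℝ) (a b c d : E) :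
    dirM G (-a) b c d = - dirM G a b c d := by
  simp [dirM, dirD]

lemma dirM_add2 {G : E → ℝ} (hG : ContDiff ℝ (⊤ : ℕ∞) G) (a b b' c d : E) :
    dirM G a (b + b') c d = dirM G a b c d + dirM G a b' c d := by
  simp only [dirM_swap1 hG a, dirM_add1]

lemma dirM_neg2 {G : E → ℝ} (hG : ContDiff ℝ (⊤ : ℕ∞) G) (a b c d : E) :
    dirM G a (-b) c d = - dirM G a b c d := by
  simp only [dirM_swap1 hG a, dirM_neg1]

lemma dirM_add3 {G : E → ℝ} (hG : ContDiff ℝ (⊤ : ℕ∞) G) (a b c c' d : E) :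
    dirM G a b (c + c') d = dirM G a b c d + dirM G a b c' d := by
  simp only [dirM_swap2 hG a b, dirM_add2 hG]

lemma dirM_add4 {G : E → ℝ} (hG : ContDiff ℝ (⊤ : ℕ∞) G) (a b c d d' : E) :
    dirM G a b c (d + d') = dirM G a b c d + dirM G a b c d' := by
  simp only [dirM_swap3 hG a b c, dirM_add3 hG]

lemma dirM_comp {G : E → ℝ} (hG : ContDiff ℝ (⊤ : ℕ∞) G) (T : E →L[ℝ] E) (a b c d : E) :
    dirM (G ∘ T) a b c d = dirM G (T a) (T b) (T c) (T d) := by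
  have h1 := dirD_smooth (T d) hG
  have h2 := dirD_smooth (T c) h1
  have h3 := dirD_smooth (T b) h2
  rw [dirM, dirD_comp d hG, dirD_comp c h1, dirD_comp b h2, dirD_comp a h3]
  simp [dirM]

end helpers

section helpers2

variable {χ : ℕ}

lemma pderivLam_eq (i : Fin χ) {G : (Fin χ → ℝ) × (Fin χ → ℝ) → ℝ}
    (hG : ContDiff ℝ (⊤ : ℕ∞) G) :
    pderivLam i (Function.curry G) = Function.curry (dirD (Pi.single i 1, 0) G) := by
  funext l a
  have hd : Differentiable ℝ G := hG.differentiable (by simp)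
  have := (HasFDerivAt.comp (f := fun l' => (l', a)) l (hd (l, a)).hasFDerivAt
    (hasFDerivAt_prodMk_left l a)).fderiv
  change fderiv ℝ (G ∘ fun l' => (l', a)) l _ = _
  rw [this]
  simp [dirD, Function.curry]

lemma pderivAff_eq (i : Fin χ) {G : (Fin χ → ℝ) × (Fin χ → ℝ) → ℝ}
    (hG : ContDiff ℝ (⊤ : ℕ∞) G) :
    pderivAff i (Function.curry G) = Function.curry (dirD (0, Pi.single i 1) G) := by
  funext l a
  have hd : Differentiable ℝ G := hG.differentiable (by simp)
  have := ((hd (l, a)).hasFDerivAt.comp a (hasFDerivAt_prodMk_right l a)).fderiv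
  change fderiv ℝ (G ∘ fun a' => (l, a')) a _ = _
  rw [this]
  simp [dirD, Function.curry]

lemma Dmix13 {F : (Fin χ → ℝ) → (Fin χ → ℝ) → ℝ}
    (hF : ContDiff ℝ (⊤ : ℕ∞) (Function.uncurry F)) (i j k m : Fin χ) :
    Dmix [i] [j, k, m] F = dirM (Function.uncurry F) (Pi.single i 1, 0) (0, Pi.single j 1)
      (0, Pi.single k 1) (0, Pi.single m 1) := by
  have h1 := dirD_smooth (0, Pi.single m 1) hF
  have h2 := dirD_smooth (0, Pi.single k 1) h1
  have h3 := dirD_smooth (0, Pi.single j 1) h2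
  simp only [Dmix, List.foldr]
  rw [← Function.curry_uncurry F, pderivAff_eq m hF, pderivAff_eq k h1, pderivAff_eq j h2,
    pderivLam_eq i h3]
  rfl

lemma Dmix22 {F : (Fin χ → ℝ) → (Fin χ → ℝ) → ℝ}
    (hF : ContDiff ℝ (⊤ : ℕ∞) (Function.uncurry F)) (i j k m : Fin χ) :
    Dmix [i, j] [k, m] F = dirM (Function.uncurry F) (Pi.single i 1, 0) (Pi.single j 1, 0)
      (0, Pi.single k 1) (0, Pi.single m 1) := by
  have h1 := dirD_smooth (0, Pi.single m 1) hF
  have h2 := dirD_smooth (0, Pi.single k 1) h1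
  have h3 := dirD_smooth (Pi.single j 1, 0) h2
  simp only [Dmix, List.foldr]
  rw [← Function.curry_uncurry F, pderivAff_eq m hF, pderivAff_eq k h1, pderivLam_eq j h2,
    pderivLam_eq i h3]
  rfl

lemma dirM_vanish {F : (Fin χ → ℝ) → (Fin χ → ℝ) → ℝ}
    (hF : ContDiff ℝ (⊤ : ℕ∞) (Function.uncurry F)) (h0 : ∀ A, F 0 A = 0)
    (a b c d : Fin χ → ℝ) :
    dirM (Function.uncurry F) (0, a) (0, b) (0, c) (0, d) = 0 := by
  let T : (Fin χ → ℝ) × (Fin χ → ℝ) →L[ℝ] (Fin χ → ℝ) × (Fin χ → ℝ) :=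
    (0 : _ →L[ℝ] (Fin χ → ℝ)).prod (ContinuousLinearMap.snd ℝ _ _)
  have h := dirM_comp hF T (0, a) (0, b) (0, c) (0, d)
  have hz : Function.uncurry F ∘ T = fun _ => 0 := by
    funext p
    simp [T, Function.uncurry, h0]
  have hD : ∀ v : (Fin χ → ℝ) × (Fin χ → ℝ), dirD v (fun _ => (0 : ℝ)) = fun _ => 0 := by
    intro v; funext p; simp [dirD]
  rw [hz] at h
  simp only [dirM, hD] at h
  exact h.symm

end helpers2

/-- `Q_{α,βγδ}(B) − Q_{β,γδα}(−B) − Q_{γ,δαβ}(−B) + Q_{δ,αβγ}(B)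
      = Q_{βγ,αδ}(−B) − Q_{αδ,βγ}(B)`. -/
theorem third_response_from_second_responses_second_cumulants {χ : ℕ} (hχ : 1 ≤ χ)
    (f g : (Fin χ → ℝ) → (Fin χ → ℝ) → ℝ)
    (hf : ContDiff ℝ (⊤ : ℕ∞) (Function.uncurry f))
    (hg : ContDiff ℝ (⊤ : ℕ∞) (Function.uncurry g))
    (hFR : ∀ l A : Fin χ → ℝ, f l A = g (A - l) A)
    (hfnorm : ∀ A : Fin χ → ℝ, f 0 A = 0)
    (hgnorm : ∀ A : Fin χ → ℝ, g 0 A = 0)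
    (α β γ δ : Fin χ) :
    Dmix [α] [β, γ, δ] f - Dmix [β] [γ, δ, α] g - Dmix [γ] [δ, α, β] g +
        Dmix [δ] [α, β, γ] f =
      Dmix [β, γ] [α, δ] g - Dmix [α, δ] [β, γ] f := by
  let T : (Fin χ → ℝ) × (Fin χ → ℝ) →L[ℝ] (Fin χ → ℝ) × (Fin χ → ℝ) :=
    ContinuousLinearMap.prod (ContinuousLinearMap.snd ℝ _ _ - ContinuousLinearMap.fst ℝ _ _)
      (ContinuousLinearMap.snd ℝ _ _)
  have hfT : Function.uncurry f = Function.uncurry g ∘ T := by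
    funext p
    simp [T, Function.uncurry, hFR]
  have hTl : ∀ e : Fin χ → ℝ, T (e, 0) = -(e, 0) := by
    intro e; simp [T]
  have hTa : ∀ e : Fin χ → ℝ, T (0, e) = (e, 0) + (0, e) := by
    intro e; simp [T]
  have hv1 := dirM_vanish hf hfnorm (Pi.single α 1) (Pi.single β 1) (Pi.single γ 1)
    (Pi.single δ 1)
  have hv2 := dirM_vanish hg hgnorm (Pi.single α 1) (Pi.single β 1) (Pi.single γ 1)
    (Pi.single δ 1)
  rw [Dmix13 hf, Dmix13 hg, Dmix13 hg, Dmix13 hf, Dmix22 hg, Dmix22 hf]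
  rw [hfT] at hv1 ⊢
  simp only [dirM_comp hg, hTl, hTa] at hv1 ⊢
  generalize Function.uncurry g = G at *
  generalize ((Pi.single α 1, 0) : (Fin χ → ℝ) × (Fin χ → ℝ)) = la at *
  generalize ((Pi.single β 1, 0) : (Fin χ → ℝ) × (Fin χ → ℝ)) = lb at *
  generalize ((Pi.single γ 1, 0) : (Fin χ → ℝ) × (Fin χ → ℝ)) = lc at *
  generalize ((Pi.single δ 1, 0) : (Fin χ → ℝ) × (Fin χ → ℝ)) = ld at *
  generalize ((0, Pi.single α 1) : (Fin χ → ℝ) × (Fin χ → ℝ)) = aa at *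
  generalize ((0, Pi.single β 1) : (Fin χ → ℝ) × (Fin χ → ℝ)) = ab at *
  generalize ((0, Pi.single γ 1) : (Fin χ → ℝ) × (Fin χ → ℝ)) = ac at *
  generalize ((0, Pi.single δ 1) : (Fin χ → ℝ) × (Fin χ → ℝ)) = ad at *
  simp only [dirM_add1, dirM_add2 hg, dirM_add3 hg, dirM_add4 hg, dirM_neg1, dirM_neg2 hg]
    at hv1 hv2 ⊢
  simp only [dirM_swap1 hg, dirM_swap2 hg, dirM_swap3 hg] at hv1 hv2 ⊢
  linarith
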